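/- arXiv:2201.03081 — 3 statements merged into one kernel-verified Lean document; each statement's English description precedes it below -/
import Mathlib

section
/- Let A = [[−2,−1],[1,0]], B = [[2,1],[−1,0]], C = [[2,−1],[1,0]], D = [[−2,1],[−1,0]] be integer matrices, and for each natural number k set w_A = Aᵏ·(1,1)ᵀ, w_B = Bᵏ·(1,1)ᵀ, w_C = Cᵏ·(1,−1)ᵀ, w_D = Dᵏ·(1,−1)ᵀ. Then the absolute value of the first entry of each of w_A, w_B, w_C, w_D equals 2k+1, and the absolute value of the second entry of each equals |2k−1|. In particular, the maximum over these four vectors of the absolute value of the first entry is 2k+1, which is a strictly increasing function of k. -/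
open Matrix

theorem pow_wA (k : ℕ) : (!![(-2 : ℤ), -1; 1, 0] ^ k) *ᵥ ![1, 1] = ![(-1) ^ k * (2 * (k : ℤ) + 1), (-1) ^ k * -(2 * (k : ℤ) - 1)] := by
  induction k with
  | zero => simp
  | succ k ih =>
    rw [pow_succ', ← Matrix.mulVec_mulVec, ih]
    ext i
    fin_cases i <;> simp [Matrix.mulVec, dotProduct, Fin.sum_univ_two, pow_succ] <;> ring

theorem pow_wB (k : ℕ) : (!![(2 : ℤ), 1; -1, 0] ^ k) *ᵥ ![1, 1] = ![2 * (k : ℤ) + 1, -(2 * (k : ℤ) - 1)] := by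
  induction k with
  | zero => simp
  | succ k ih =>
    rw [pow_succ', ← Matrix.mulVec_mulVec, ih]
    ext i
    fin_cases i <;> simp [Matrix.mulVec, dotProduct, Fin.sum_univ_two, pow_succ] <;> ring

theorem pow_wC (k : ℕ) : (!![(2 : ℤ), -1; 1, 0] ^ k) *ᵥ ![1, -1] = ![2 * (k : ℤ) + 1, 2 * (k : ℤ) - 1] := by
  induction k with
  | zero => simp
  | succ k ih =>
    rw [pow_succ', ← Matrix.mulVec_mulVec, ih]
    ext i
    fin_cases i <;> simp [Matrix.mulVec, dotProduct, Fin.sum_univ_two, pow_succ] <;> ring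

theorem pow_wD (k : ℕ) : (!![(-2 : ℤ), 1; -1, 0] ^ k) *ᵥ ![1, -1] = ![(-1) ^ k * (2 * (k : ℤ) + 1), (-1) ^ k * (2 * (k : ℤ) - 1)] := by
  induction k with
  | zero => simp
  | succ k ih =>
    rw [pow_succ', ← Matrix.mulVec_mulVec, ih]
    ext i
    fin_cases i <;> simp [Matrix.mulVec, dotProduct, Fin.sum_univ_two, pow_succ] <;> ring

/-- With `A = [[−2,−1],[1,0]]`, `B = [[2,1],[−1,0]]`, `C = [[2,−1],[1,0]]`,
`D = [[−2,1],[−1,0]]` over `ℤ` and, for each `k : ℕ`, `w_A = Aᵏ·(1,1)ᵀ`, `w_B = Bᵏ·(1,1)ᵀ`,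
`w_C = Cᵏ·(1,−1)ᵀ`, `w_D = Dᵏ·(1,−1)ᵀ`: the absolute value of the first entry of each of these
vectors is `2k+1`, the absolute value of the second entry of each is `|2k−1|`, so the maximum of
the absolute values of the first entries is `2k+1`, a strictly increasing function of `k`. -/
theorem stmt_9 (k : ℕ) :
    let wA : Fin 2 → ℤ := (!![(-2 : ℤ), -1; 1, 0] ^ k) *ᵥ ![1, 1]
    let wB : Fin 2 → ℤ := (!![(2 : ℤ), 1; -1, 0] ^ k) *ᵥ ![1, 1]
    let wC : Fin 2 → ℤ := (!![(2 : ℤ), -1; 1, 0] ^ k) *ᵥ ![1, -1]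
    let wD : Fin 2 → ℤ := (!![(-2 : ℤ), 1; -1, 0] ^ k) *ᵥ ![1, -1]
    (|wA 0| = 2 * k + 1 ∧ |wB 0| = 2 * k + 1 ∧ |wC 0| = 2 * k + 1 ∧ |wD 0| = 2 * k + 1) ∧
    (|wA 1| = |2 * (k : ℤ) - 1| ∧ |wB 1| = |2 * (k : ℤ) - 1| ∧
      |wC 1| = |2 * (k : ℤ) - 1| ∧ |wD 1| = |2 * (k : ℤ) - 1|) ∧
    max (max |wA 0| |wB 0|) (max |wC 0| |wD 0|) = 2 * k + 1 ∧
    StrictMono (fun k : ℕ => (2 * k + 1 : ℤ)) := by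
  intro wA wB wC wD
  have hk : |2 * (k : ℤ) + 1| = 2 * k + 1 := abs_of_nonneg (by positivity)
  have a0 : |wA 0| = 2 * k + 1 := by simp only [wA, pow_wA]; simp [abs_mul, hk]
  have b0 : |wB 0| = 2 * k + 1 := by simp only [wB, pow_wB]; simp [hk]
  have c0 : |wC 0| = 2 * k + 1 := by simp only [wC, pow_wC]; simp [hk]
  have d0 : |wD 0| = 2 * k + 1 := by simp only [wD, pow_wD]; simp [abs_mul, hk]
  have a1 : |wA 1| = |2 * (k : ℤ) - 1| := by
    simp only [wA, pow_wA, Matrix.cons_val_one, Matrix.cons_val_fin_one, abs_mul, abs_neg,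
      abs_pow, abs_one, one_pow, one_mul]
  have b1 : |wB 1| = |2 * (k : ℤ) - 1| := by
    simp only [wB, pow_wB, Matrix.cons_val_one, Matrix.cons_val_fin_one, abs_neg]
  have c1 : |wC 1| = |2 * (k : ℤ) - 1| := by
    simp only [wC, pow_wC, Matrix.cons_val_one, Matrix.cons_val_fin_one]
  have d1 : |wD 1| = |2 * (k : ℤ) - 1| := by
    simp only [wD, pow_wD, Matrix.cons_val_one, Matrix.cons_val_fin_one, abs_mul, abs_neg,
      abs_pow, abs_one, one_pow, one_mul]
  refine ⟨⟨a0, b0, c0, d0⟩, ⟨a1, b1, c1, d1⟩, ?_, ?_⟩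
  · rw [a0, b0, c0, d0]; simp
  · intro a b hab
    simp only
    omega
end

section
/- Let A be the integer matrix [[−2, −1], [1, 0]] and for each natural number k set v_k = Aᵏ·(1,1)ᵀ ∈ ℤ². Then for all natural numbers k ≠ l, one has v_k ≠ v_l and v_k ≠ −v_l; consequently the vectors v_k for k ∈ ℕ are pairwise distinct even up to an overall sign. -/
open Matrix

theorem v_formula (k : ℕ) : (!![(-2 : ℤ), -1; 1, 0] ^ k) *ᵥ ![1, 1]
    = ![(-1 : ℤ) ^ k * (2 * (k : ℤ) + 1), (-1 : ℤ) ^ k * (1 - 2 * (k : ℤ))] := by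
  induction k with
  | zero => simp
  | succ n ih =>
    rw [pow_succ', ← Matrix.mulVec_mulVec, ih]
    ext i
    fin_cases i
    · simp [Matrix.mulVec, dotProduct, Fin.sum_univ_two]; ring
    · simp [Matrix.mulVec, dotProduct, Fin.sum_univ_two]; ring

/-- For `A = [[−2,−1],[1,0]]` over `ℤ` and `v_k = Aᵏ·(1,1)ᵀ`, the vectors `v_k` are pairwise
distinct even up to an overall sign: for `k ≠ l`, `v_k ≠ v_l` and `v_k ≠ −v_l`. -/
theorem stmt_10 :
    let v : ℕ → Fin 2 → ℤ := fun k => (!![(-2 : ℤ), -1; 1, 0] ^ k) *ᵥ ![1, 1]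
    ∀ k l : ℕ, k ≠ l → v k ≠ v l ∧ v k ≠ -v l := by
  intro v k l hkl
  have h0 : ∀ n, v n 0 = (-1) ^ n * (2 * n + 1) := fun n => by
    simp only [v, v_formula]; rfl
  constructor
  · intro h
    have h1 := congrFun h 0
    rw [h0, h0] at h1
    rcases neg_one_pow_eq_or ℤ k with a | a <;> rcases neg_one_pow_eq_or ℤ l with b | b <;>
      rw [a, b] at h1 <;> omega
  · intro h
    have h1 := congrFun h 0
    rw [Pi.neg_apply, h0, h0] at h1
    rcases neg_one_pow_eq_or ℤ k with a | a <;> rcases neg_one_pow_eq_or ℤ l with b | b <;>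
      rw [a, b] at h1 <;> omega
end

section
/- Let R be a commutative unital ring, let u ∈ R satisfy u² = 1, and let a ∈ R. Let M be the 2×2 matrix [[−2, −u], [u, 0]] over R. Then for every natural number k, Mᵏ · (a, u·a)ᵀ = (−1)ᵏ · ((2k+1)·a, −(2k−1)·u·a)ᵀ, where the integer scalars (−1)ᵏ, 2k+1, and 2k−1 act via the canonical ring map ℤ → R. -/
open Matrix

/-- Let `R` be a commutative ring, `u ∈ R` with `u² = 1`, and `a ∈ R`. For
`M = [[−2, −u], [u, 0]]` and every `k : ℕ`,
`Mᵏ · (a, u·a)ᵀ = (−1)ᵏ · ((2k+1)·a, −(2k−1)·u·a)ᵀ`, where the integer scalars act via the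
canonical ring map `ℤ → R`. -/
theorem stmt_11 (R : Type*) [CommRing R] (u a : R) (hu : u ^ 2 = 1) (k : ℕ) :
    (!![(-2 : R), -u; u, 0] ^ k) *ᵥ ![a, u * a] =
      (((-1 : ℤ) ^ k : ℤ) : R) •
        ![(((2 * k + 1 : ℤ)) : R) * a, -((((2 * k - 1 : ℤ)) : R)) * (u * a)] := by
  induction k with
  | zero =>
    ext i
    fin_cases i <;> simp
  | succ n ih =>
    rw [pow_succ', ← Matrix.mulVec_mulVec, ih, Matrix.mulVec_smul]
    ext i
    fin_cases i
    · simp [Matrix.mulVec, dotProduct, Fin.sum_univ_two]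
      linear_combination ((-1 : R) ^ n * (2 * n - 1) * a) * hu
    · simp [Matrix.mulVec, dotProduct, Fin.sum_univ_two]
      ring
end
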